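/- For every constant κ > 0 there exist W₀ and K such that for all W ≥ W₀, all cubes Λ of side W in ℤ³, and all E ∈ 𝓘 the following holds: with H(a) = aᵀC⁻¹a − κ Σ_{j∈Λ}(|a_j|³ + |a_j|/W²), with the small-field region I¹ = {a ∈ ℝ^Λ : |a_j| ≤ W^{−1/8} for all j}, with Z(H) = ∫_{I¹} e^{−½H(a)} da and with Z₀ = ∫_{ℝ^Λ} e^{−½ aᵀC⁻¹a} da, one has Z(H) ≤ e^{K|Λ|/W³} Z₀. -/

import Mathlib

open scoped BigOperators Topology
open Matrix MeasureTheory Filter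

noncomputable section

/-- The discrete torus of side lengths `L i`; when each `L i` is a positive multiple of `W`,
this is a union of cubes of side `W` (containing `0`) with periodic boundary conditions. -/
abbrev Torus (L : Fin 3 → ℕ) := (i : Fin 3) → ZMod (L i)

/-- Unit lattice vector in direction `i`. -/
def unitVec (L : Fin 3 → ℕ) (i : Fin 3) : Torus L := fun j => if j = i then 1 else 0

/-- Discrete Laplacian with periodic boundary conditions. -/
def lap (L : Fin 3 → ℕ) : Matrix (Torus L) (Torus L) ℝ :=
  Matrix.of fun x y =>
    (∑ i : Fin 3, ((if y = x + unitVec L i then (1 : ℝ) else 0) +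
        (if y = x - unitVec L i then (1 : ℝ) else 0))) - (if y = x then 6 else 0)

/-- Distance to `0` in `ℤ/n`, via the minimal representative. -/
def zdist {n : ℕ} (x : ZMod n) : ℕ := min x.val (n - x.val)

/-- Euclidean distance on the torus. -/
def tdist (L : Fin 3 → ℕ) (x y : Torus L) : ℝ :=
  Real.sqrt (∑ i : Fin 3, ((zdist (x i - y i) : ℝ)) ^ 2)

/-- The band covariance profile `J = (-W²Δ + 1)⁻¹`. -/
def Jmat (L : Fin 3 → ℕ) [∀ i, NeZero (L i)] (W : ℕ) : Matrix (Torus L) (Torus L) ℝ :=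
  (((W : ℝ) ^ 2) • (-lap L) + 1)⁻¹

def mr2 (E : ℝ) : ℝ := 2 * (1 - E ^ 2 / 4)
def mi2 (E : ℝ) : ℝ := E * Real.sqrt (1 - E ^ 2 / 4)
def mr (E : ℝ) : ℝ := Real.sqrt (mr2 E)

/-- `ℰ = E/2 - i√(1 - E²/4)`. -/
def calE (E : ℝ) : ℂ := ((E / 2 : ℝ) : ℂ) - (Real.sqrt (1 - E ^ 2 / 4) : ℝ) * Complex.I
/-- `ℰ̄ = E - ℰ = E/2 + i√(1 - E²/4)`, the complex conjugate of `ℰ`. -/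
def calEbar (E : ℝ) : ℂ := ((E / 2 : ℝ) : ℂ) + (Real.sqrt (1 - E ^ 2 / 4) : ℝ) * Complex.I

/-- `C = (-W²Δ + m_r²)⁻¹`. -/
def Cmat (L : Fin 3 → ℕ) [∀ i, NeZero (L i)] (W : ℕ) (E : ℝ) : Matrix (Torus L) (Torus L) ℝ :=
  (((W : ℝ) ^ 2) • (-lap L) + mr2 E • 1)⁻¹

/-- `B = (C⁻¹ + i m_i²·Id)⁻¹`. -/
def Bmat (L : Fin 3 → ℕ) [∀ i, NeZero (L i)] (W : ℕ) (E : ℝ) : Matrix (Torus L) (Torus L) ℂ :=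
  (((Cmat L W E)⁻¹).map Complex.ofReal + (mi2 E * Complex.I) • 1)⁻¹

/-- The energy window `𝓘 = {E : η ≤ |E| ≤ 1.8}`. -/
def specI (η : ℝ) : Set ℝ := {E : ℝ | η ≤ |E| ∧ |E| ≤ 1.8}

/-- Wigner semicircle density `(1/π)√(1 - E²/4)`. -/
def rhoSC (E : ℝ) : ℝ := Real.sqrt (1 - E ^ 2 / 4) / Real.pi

/-- Real quadratic form `aᵀ M a`. -/
def qf (L : Fin 3 → ℕ) [∀ i, NeZero (L i)] (M : Matrix (Torus L) (Torus L) ℝ)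
    (a : Torus L → ℝ) : ℝ := a ⬝ᵥ M.mulVec a

/-!
Write `A = C⁻¹`. The cubic perturbation is removed by the change of variables
`a ↦ a - 4κ C (a_j |a_j|)_j`, which is injective on the small-field region: expanding the square,
the Gaussian weight of the image beats that of `a` by at least `2κ ∑ |a_j|³`, where only `A ≥ m_r²`
and the smallness of `a` are used. A quarter of this gain pays for the cubic term. The Jacobian
determinant is at least `exp (-16κ ∑ C_jj |a_j|)`, and since `C_jj = O(W⁻²)`, it and the linear
term are of the form `exp (O(W⁻²) ∑ |a_j|)`, which by Young's inequality costs the rest of the gain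
and a factor `exp (O(|Λ| / W³))`.
-/

section CoerciveMatrix

variable {ι : Type*} [DecidableEq ι] {A : Matrix ι ι ℝ} {m : ℝ}

lemma posDef_of_posSemidef_sub (hm : 0 < m) (hA : (A - m • 1).PosSemidef) : A.PosDef := by
  simpa using (PosDef.one.smul hm).add_posSemidef hA

variable [Fintype ι]

lemma mul_dotProduct_self_le_of_posSemidef_sub (hA : (A - m • 1).PosSemidef) (x : ι → ℝ) :
    m * (x ⬝ᵥ x) ≤ x ⬝ᵥ A *ᵥ x := by
  have h := hA.dotProduct_mulVec_nonneg x
  simp only [star_trivial, sub_mulVec, smul_mulVec, one_mulVec, dotProduct_sub, dotProduct_smul,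
    smul_eq_mul] at h
  linarith

lemma mul_inv_cancel_of_posSemidef_sub (hm : 0 < m) (hA : (A - m • 1).PosSemidef) :
    A * A⁻¹ = 1 :=
  mul_nonsing_inv A ((isUnit_iff_isUnit_det A).1 (posDef_of_posSemidef_sub hm hA).isUnit)

lemma mul_dotProduct_inv_mulVec_le (hm : 0 < m) (hA : (A - m • 1).PosSemidef) (x : ι → ℝ) :
    m * (x ⬝ᵥ A⁻¹ *ᵥ x) ≤ x ⬝ᵥ x := by
  have hAy : A *ᵥ (A⁻¹ *ᵥ x) = x := by
    rw [mulVec_mulVec, mul_inv_cancel_of_posSemidef_sub hm hA, one_mulVec]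
  set y := A⁻¹ *ᵥ x
  have hcoercive := mul_dotProduct_self_le_of_posSemidef_sub hA y
  have hsq : 0 ≤ (m • y - x) ⬝ᵥ (m • y - x) := by
    simpa using dotProduct_star_self_nonneg (m • y - x)
  rw [hAy, dotProduct_comm y x] at hcoercive
  simp only [sub_dotProduct, dotProduct_sub, smul_dotProduct, dotProduct_smul, smul_eq_mul,
    dotProduct_comm y x] at hsq
  nlinarith

lemma integrable_exp_neg_half_dotProduct_mulVec (hm : 0 < m) (hA : (A - m • 1).PosSemidef) :
    Integrable fun x : ι → ℝ => Real.exp (-(1 / 2) * (x ⬝ᵥ A *ᵥ x)) := by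
  have hprod : Integrable fun x : ι → ℝ => ∏ i, Real.exp (-(m / 2) * x i ^ 2) :=
    Integrable.fintype_prod fun _ => integrable_exp_neg_mul_sq (by positivity)
  refine hprod.mono' (Continuous.aestronglyMeasurable (by fun_prop)) (ae_of_all _ fun x => ?_)
  rw [Real.norm_eq_abs, Real.abs_exp, ← Real.exp_sum, Real.exp_le_exp, ← Finset.mul_sum]
  have hcoercive := mul_dotProduct_self_le_of_posSemidef_sub hA x
  simp only [dotProduct, ← sq] at hcoercive ⊢
  linarith

end CoerciveMatrix

section Determinant

lemma exp_neg_two_mul_le_one_sub {x : ℝ} (h0 : 0 ≤ x) (h1 : x ≤ 1 / 2) :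
    Real.exp (-2 * x) ≤ 1 - x := by
  have hpos : 0 < 1 - x := by linarith
  rw [← Real.le_log_iff_exp_le hpos]
  refine le_trans ?_ (Real.one_sub_inv_le_log_of_pos hpos)
  have hinv : (1 - x)⁻¹ ≤ 1 + 2 * x := by
    rw [inv_le_iff_one_le_mul₀ hpos]
    nlinarith
  linarith

variable {ι : Type*} [Fintype ι] [DecidableEq ι]

lemma det_one_sub_eq_prod_eigenvalues {S : Matrix ι ι ℝ} (hS : S.IsHermitian) :
    (1 - S).det = ∏ i, (1 - hS.eigenvalues i) := by
  have h := eval_charpoly S 1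
  rw [hS.charpoly_eq, Polynomial.eval_prod] at h
  simpa using h.symm

lemma eigenvalues_le_of_dotProduct_mulVec_le {S : Matrix ι ι ℝ} (hS : S.IsHermitian) {b : ℝ}
    (hb : ∀ v : ι → ℝ, v ⬝ᵥ S *ᵥ v ≤ b * (v ⬝ᵥ v)) (i : ι) : hS.eigenvalues i ≤ b := by
  set v : ι → ℝ := (hS.eigenvectorBasis i).ofLp with hv
  have hnorm : v ⬝ᵥ v = 1 := by
    have h := hS.eigenvectorBasis.orthonormal.1 i
    rw [EuclideanSpace.norm_eq, Real.sqrt_eq_one] at h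
    simpa [dotProduct, sq, hv] using h
  simpa [hS.eigenvalues_eq i, ← hv, hnorm] using hb v

lemma exp_neg_two_mul_trace_le_det_one_sub {S : Matrix ι ι ℝ} (hS : S.PosSemidef)
    (hS' : ∀ v : ι → ℝ, v ⬝ᵥ S *ᵥ v ≤ 1 / 2 * (v ⬝ᵥ v)) :
    Real.exp (-2 * S.trace) ≤ (1 - S).det := by
  have htrace : S.trace = ∑ i, hS.isHermitian.eigenvalues i := by
    simpa using hS.isHermitian.trace_eq_sum_eigenvalues
  rw [det_one_sub_eq_prod_eigenvalues hS.isHermitian, htrace, Finset.mul_sum, Real.exp_sum]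
  gcongr with i
  exact exp_neg_two_mul_le_one_sub (hS.eigenvalues_nonneg i)
    (eigenvalues_le_of_dotProduct_mulVec_le hS.isHermitian hS' i)

lemma exp_neg_two_mul_sum_le_det_one_sub_mul_diagonal {C : Matrix ι ι ℝ} (hC : C.PosSemidef)
    {m : ℝ} (hm : 0 < m) (hCm : ∀ x : ι → ℝ, m * (x ⬝ᵥ C *ᵥ x) ≤ x ⬝ᵥ x)
    {d : ι → ℝ} (hd0 : ∀ i, 0 ≤ d i) (hd : ∀ i, 2 * d i ≤ m) :
    Real.exp (-2 * ∑ i, C i i * d i) ≤ (1 - C * diagonal d).det := by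
  -- `C * diagonal d` need not be symmetric; with `e = √d`, Sylvester's identity replaces it by
  -- `diagonal e * C * diagonal e`.
  obtain ⟨e, rfl⟩ : ∃ e : ι → ℝ, d = fun i => e i * e i :=
    ⟨fun i => √(d i), funext fun i => (Real.mul_self_sqrt (hd0 i)).symm⟩
  have hS : (diagonal e * C * diagonal e).PosSemidef := by
    simpa using hC.mul_mul_conjTranspose_same (diagonal e)
  have hS' (v : ι → ℝ) : v ⬝ᵥ (diagonal e * C * diagonal e) *ᵥ v ≤ 1 / 2 * (v ⬝ᵥ v) := by
    have hform : v ⬝ᵥ (diagonal e * C * diagonal e) *ᵥ v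
        = (diagonal e *ᵥ v) ⬝ᵥ C *ᵥ (diagonal e *ᵥ v) := by
      rw [Matrix.mul_assoc, ← mulVec_mulVec, ← mulVec_mulVec, dotProduct_mulVec,
        ← mulVec_transpose, diagonal_transpose]
    have hnorm : (diagonal e *ᵥ v) ⬝ᵥ (diagonal e *ᵥ v) ≤ m * (1 / 2 * (v ⬝ᵥ v)) := by
      simp only [dotProduct, mulVec_diagonal, Finset.mul_sum]
      refine Finset.sum_le_sum fun i _ => ?_
      nlinarith [mul_le_mul_of_nonneg_right (hd i) (mul_self_nonneg (v i))]
    rw [hform]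
    exact le_of_mul_le_mul_left ((hCm _).trans hnorm) hm
  have htrace : (diagonal e * C * diagonal e).trace = ∑ i, C i i * (e i * e i) := by
    refine Finset.sum_congr rfl fun i _ => ?_
    simp only [diag_apply, diagonal_mul, mul_diagonal]
    ring
  rw [← htrace, ← diagonal_mul_diagonal, ← Matrix.mul_assoc, det_one_sub_mul_comm,
    ← Matrix.mul_assoc]
  exact exp_neg_two_mul_trace_le_det_one_sub hS hS'

end Determinant

lemma setIntegral_le_mul_integral_of_injOn {E : Type*} [NormedAddCommGroup E] [NormedSpace ℝ E]
    [FiniteDimensional ℝ E] [MeasurableSpace E] [BorelSpace E] {μ : Measure E} [μ.IsAddHaarMeasure]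
    {s : Set E} (hs : MeasurableSet s) {T : E → E} {T' : E → E →L[ℝ] E}
    (hT : ∀ x ∈ s, HasFDerivWithinAt T (T' x) s x) (hinj : s.InjOn T) {f g : E → ℝ} {c : ℝ}
    (hf : Integrable f μ) (hf0 : 0 ≤ f) (hg0 : 0 ≤ g) (hc : 0 ≤ c)
    (hgf : ∀ x ∈ s, g x ≤ c * (|(T' x).det| * f (T x))) :
    ∫ x in s, g x ∂μ ≤ c * ∫ x, f x ∂μ := by
  have hint : IntegrableOn (fun x => |(T' x).det| • f (T x)) s μ :=
    (integrableOn_image_iff_integrableOn_abs_det_fderiv_smul μ hs hT hinj f).1 hf.integrableOn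
  calc ∫ x in s, g x ∂μ
      ≤ ∫ x in s, c * (|(T' x).det| • f (T x)) ∂μ :=
        integral_mono_of_nonneg (ae_of_all _ hg0) (hint.const_mul c)
          ((ae_restrict_iff' hs).2 (ae_of_all _ hgf))
    _ = c * ∫ x in T '' s, f x ∂μ := by
        rw [integral_const_mul, integral_image_eq_integral_abs_det_fderiv_smul μ hs hT hinj]
    _ ≤ c * ∫ x, f x ∂μ :=
        mul_le_mul_of_nonneg_left (setIntegral_le_integral hf (ae_of_all _ hf0)) hc

section SignedSquare

lemma hasDerivAt_mul_abs (x : ℝ) : HasDerivAt (fun y : ℝ => y * |y|) (2 * |x|) x := by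
  obtain rfl | hx := eq_or_ne x 0
  · rw [hasDerivAt_iff_tendsto_slope_zero]
    have h : Tendsto (fun t : ℝ => |t|) (𝓝[≠] 0) (𝓝 (2 * |0|)) := by
      simpa using (continuous_abs.tendsto (0 : ℝ)).mono_left nhdsWithin_le_nhds
    refine h.congr' ?_
    filter_upwards [self_mem_nhdsWithin] with t ht
    simp [show t ≠ 0 from ht]
  · refine ((hasDerivAt_id x).mul (hasDerivAt_abs hx)).congr_deriv ?_
    simp only [id, self_mul_sign]
    ring

lemma abs_mul_abs_sub_mul_abs_le (x y : ℝ) :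
    |(x * |x| - y * |y|)| ≤ (|x| + |y|) * |x - y| :=
  calc |(x * |x| - y * |y|)| = |(x - y) * |x| + y * (|x| - |y|)| := by ring_nf
    _ ≤ |x - y| * |x| + |y| * |x - y| := by
        refine (abs_add_le _ _).trans ?_
        rw [abs_mul, abs_mul, abs_abs]
        exact add_le_add le_rfl
          (mul_le_mul_of_nonneg_left (abs_abs_sub_abs_le x y) (abs_nonneg y))
    _ = (|x| + |y|) * |x - y| := by ring

variable {ι : Type*}

/-- The vector field `a ↦ (a_j |a_j|)_j`, which is the gradient of `⅓ ∑ j, |a_j|³`. -/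
def signedSq (a : ι → ℝ) : ι → ℝ := fun j => a j * |a j|

variable [Fintype ι]

lemma signedSq_dotProduct_self (a : ι → ℝ) : signedSq a ⬝ᵥ a = ∑ j, |a j| ^ 3 := by
  refine Finset.sum_congr rfl fun j _ => ?_
  rw [signedSq, pow_succ, sq_abs]
  ring

lemma signedSq_dotProduct_signedSq_le {a : ι → ℝ} {δ : ℝ} (ha : ∀ j, |a j| ≤ δ) :
    signedSq a ⬝ᵥ signedSq a ≤ δ * ∑ j, |a j| ^ 3 := by
  rw [Finset.mul_sum]
  refine Finset.sum_le_sum fun j _ => ?_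
  calc signedSq a j * signedSq a j = a j ^ 2 * |a j| ^ 2 := by rw [signedSq]; ring
    _ = |a j| * |a j| ^ 3 := by rw [← sq_abs]; ring
    _ ≤ δ * |a j| ^ 3 := by gcongr; exact ha j

lemma sub_dotProduct_signedSq_sub_le {a b : ι → ℝ} {δ : ℝ} (ha : ∀ j, |a j| ≤ δ)
    (hb : ∀ j, |b j| ≤ δ) :
    (a - b) ⬝ᵥ (signedSq a - signedSq b) ≤ 2 * δ * ((a - b) ⬝ᵥ (a - b)) := by
  rw [dotProduct, dotProduct, Finset.mul_sum]
  refine Finset.sum_le_sum fun j _ => ?_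
  calc (a j - b j) * (a j * |a j| - b j * |b j|)
      ≤ |a j - b j| * |(a j * |a j| - b j * |b j|)| := (le_abs_self _).trans (abs_mul _ _).le
    _ ≤ |a j - b j| * ((δ + δ) * |a j - b j|) := by
        gcongr
        exact (abs_mul_abs_sub_mul_abs_le _ _).trans (by gcongr; exacts [ha j, hb j])
    _ = 2 * δ * |a j - b j| ^ 2 := by ring
    _ = 2 * δ * ((a j - b j) * (a j - b j)) := by rw [sq_abs, sq]

variable [DecidableEq ι]

lemma hasFDerivAt_signedSq (a : ι → ℝ) :
    HasFDerivAt signedSq (toLin' (diagonal fun j => 2 * |a j|)).toContinuousLinearMap a := by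
  rw [hasFDerivAt_pi']
  intro j
  refine ((hasDerivAt_mul_abs (a j)).hasFDerivAt.comp a
    (ContinuousLinearMap.proj (R := ℝ) (φ := fun _ : ι => ℝ) j).hasFDerivAt).congr_fderiv ?_
  ext v
  simp [mulVec_diagonal, mul_comm]

end SignedSquare

section Transport

variable {ι : Type*} [Fintype ι] [DecidableEq ι] {A : Matrix ι ι ℝ} {m t δ : ℝ}

/-- The change of variables `a ↦ a - t A⁻¹ (a_j |a_j|)_j`, which, for small `a`, increases
the Gaussian weight `exp (-½ aᵀAa)` by a factor of at least `exp (½ t ∑ j, |a_j|³)`. -/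
def transport (A : Matrix ι ι ℝ) (t : ℝ) (a : ι → ℝ) : ι → ℝ := a - t • A⁻¹ *ᵥ signedSq a

/-- The Jacobian matrix of `transport A t` at `a`. -/
def transportJacobian (A : Matrix ι ι ℝ) (t : ℝ) (a : ι → ℝ) : Matrix ι ι ℝ :=
  1 - A⁻¹ * diagonal fun j => 2 * t * |a j|

lemma hasFDerivAt_transport (A : Matrix ι ι ℝ) (t : ℝ) (a : ι → ℝ) :
    HasFDerivAt (transport A t) (toLin' (transportJacobian A t a)).toContinuousLinearMap a := by
  have hshift := ((toLin' A⁻¹).toContinuousLinearMap.hasFDerivAt.comp a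
    (hasFDerivAt_signedSq a)).const_smul t
  refine ((hasFDerivAt_id a).sub hshift).congr_fderiv ?_
  have hdiag : (diagonal fun j => 2 * t * |a j|) = t • diagonal fun j => 2 * |a j| := by
    rw [← diagonal_smul]
    congr 1 with j
    simp only [Pi.smul_apply, smul_eq_mul]
    ring
  ext1 v
  simp [transportJacobian, hdiag, mulVec_mulVec]

lemma mulVec_transport (hm : 0 < m) (hA : (A - m • 1).PosSemidef) (t : ℝ) (a : ι → ℝ) :
    A *ᵥ transport A t a = A *ᵥ a - t • signedSq a := by
  rw [transport, mulVec_sub, mulVec_smul, mulVec_mulVec, mul_inv_cancel_of_posSemidef_sub hm hA,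
    one_mulVec]

lemma injOn_transport (hm : 0 < m) (hA : (A - m • 1).PosSemidef) (ht : 0 ≤ t)
    (htδ : 2 * t * δ < m) : Set.InjOn (transport A t) {a | ∀ j, |a j| ≤ δ} := by
  intro a ha b hb hab
  have hdiff : A *ᵥ (a - b) = t • (signedSq a - signedSq b) := by
    have h := congrArg (A *ᵥ ·) hab
    simp only [mulVec_transport hm hA] at h
    rw [mulVec_sub, smul_sub]
    exact sub_eq_sub_iff_sub_eq_sub.1 h
  have hcoercive := mul_dotProduct_self_le_of_posSemidef_sub hA (a - b)
  rw [hdiff, dotProduct_smul, smul_eq_mul] at hcoercive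
  have hlip := mul_le_mul_of_nonneg_left (sub_dotProduct_signedSq_sub_le ha hb) ht
  have hnonneg : 0 ≤ (a - b) ⬝ᵥ (a - b) := by simpa using dotProduct_star_self_nonneg (a - b)
  have hzero : (a - b) ⬝ᵥ (a - b) = 0 := by nlinarith
  exact sub_eq_zero.1 (dotProduct_self_eq_zero.1 hzero)

lemma transport_dotProduct_mulVec_transport_le (hm : 0 < m) (hA : (A - m • 1).PosSemidef)
    (ht : 0 ≤ t) (htδ : t * δ ≤ m) {a : ι → ℝ} (ha : ∀ j, |a j| ≤ δ) :
    transport A t a ⬝ᵥ A *ᵥ transport A t a ≤ a ⬝ᵥ A *ᵥ a - t * ∑ j, |a j| ^ 3 := by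
  set g := signedSq a with hg
  have hcross : (A⁻¹ *ᵥ g) ⬝ᵥ A *ᵥ a = g ⬝ᵥ a := by
    have hsymm : Aᵀ = A := by simpa using (posDef_of_posSemidef_sub hm hA).isHermitian.eq
    rw [dotProduct_mulVec, ← mulVec_transpose, hsymm, mulVec_mulVec,
      mul_inv_cancel_of_posSemidef_sub hm hA, one_mulVec]
  have hexpand : transport A t a ⬝ᵥ A *ᵥ transport A t a
      = a ⬝ᵥ A *ᵥ a - 2 * t * (g ⬝ᵥ a) + t ^ 2 * (g ⬝ᵥ A⁻¹ *ᵥ g) := by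
    rw [mulVec_transport hm hA]
    simp only [transport, sub_dotProduct, dotProduct_sub, smul_dotProduct, dotProduct_smul,
      smul_eq_mul, ← hg, hcross, dotProduct_comm a g, dotProduct_comm (A⁻¹ *ᵥ g) g]
    ring
  have hsum : 0 ≤ ∑ j, |a j| ^ 3 := by positivity
  have hsecond : t * (g ⬝ᵥ A⁻¹ *ᵥ g) ≤ ∑ j, |a j| ^ 3 := by
    refine le_of_mul_le_mul_left ?_ hm
    calc m * (t * (g ⬝ᵥ A⁻¹ *ᵥ g)) = t * (m * (g ⬝ᵥ A⁻¹ *ᵥ g)) := by ring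
      _ ≤ t * (δ * ∑ j, |a j| ^ 3) := by
          refine mul_le_mul_of_nonneg_left ?_ ht
          exact (mul_dotProduct_inv_mulVec_le hm hA g).trans (signedSq_dotProduct_signedSq_le ha)
      _ = (t * δ) * ∑ j, |a j| ^ 3 := by ring
      _ ≤ m * ∑ j, |a j| ^ 3 := mul_le_mul_of_nonneg_right htδ hsum
  rw [hexpand, signedSq_dotProduct_self]
  linarith [mul_le_mul_of_nonneg_left hsecond ht]

lemma exp_neg_sum_le_det_transportJacobian (hm : 0 < m) (hA : (A - m • 1).PosSemidef)
    (ht : 0 ≤ t) (htδ : 4 * t * δ ≤ m) {v : ℝ} (hv : ∀ j, A⁻¹ j j ≤ v) {a : ι → ℝ}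
    (ha : ∀ j, |a j| ≤ δ) :
    Real.exp (-(4 * t) * ∑ j, |a j| * v) ≤ (transportJacobian A t a).det := by
  have hdet := exp_neg_two_mul_sum_le_det_one_sub_mul_diagonal
    (posDef_of_posSemidef_sub hm hA).inv.posSemidef hm (mul_dotProduct_inv_mulVec_le hm hA)
    (d := fun j => 2 * t * |a j|) (fun j => by positivity)
    (fun j => by nlinarith [mul_le_mul_of_nonneg_left (ha j) ht])
  refine (Real.exp_le_exp.2 ?_).trans hdet
  have hdiag : ∑ j, A⁻¹ j j * (2 * t * |a j|) ≤ 2 * t * ∑ j, |a j| * v := by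
    rw [Finset.mul_sum]
    refine Finset.sum_le_sum fun j _ => ?_
    nlinarith [mul_le_mul_of_nonneg_right (hv j) (by positivity : 0 ≤ 2 * t * |a j|)]
  linarith

end Transport

section SmallField

lemma measurableSet_forall_abs_le {ι : Type*} [Countable ι] (δ : ℝ) :
    MeasurableSet {a : ι → ℝ | ∀ j, |a j| ≤ δ} := by
  simp only [Set.ofPred_forall]
  exact MeasurableSet.iInter fun j => measurableSet_le (by fun_prop) measurable_const

variable {ι : Type*} [Fintype ι]

lemma mul_sq_le_pow_three_add_pow_three {x s : ℝ} (hx : 0 ≤ x) (hs : 0 ≤ s) :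
    x * s ^ 2 ≤ x ^ 3 + s ^ 3 := by
  rcases le_total x s with h | h
  · nlinarith [mul_le_mul_of_nonneg_right h (sq_nonneg s), pow_nonneg hx 3]
  · nlinarith [mul_le_mul_of_nonneg_left (pow_le_pow_left₀ hs h 2) hx, pow_nonneg hs 3]

lemma sum_abs_mul_sq_le (a : ι → ℝ) {s : ℝ} (hs : 0 ≤ s) :
    ∑ j, |a j| * s ^ 2 ≤ ∑ j, |a j| ^ 3 + Fintype.card ι * s ^ 3 := by
  calc ∑ j, |a j| * s ^ 2 ≤ ∑ j, (|a j| ^ 3 + s ^ 3) :=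
        Finset.sum_le_sum fun j _ => mul_sq_le_pow_three_add_pow_three (abs_nonneg _) hs
    _ = ∑ j, |a j| ^ 3 + Fintype.card ι * s ^ 3 := by
        rw [Finset.sum_add_distrib, Finset.sum_const, Finset.card_univ, nsmul_eq_mul]

variable [DecidableEq ι] {A : Matrix ι ι ℝ} {m κ δ r s : ℝ}

/- Half of the gain `2κ ∑ |a_j|³` of `transport A (4κ)` pays for the perturbation, the other half
for the Jacobian determinant. -/
lemma exp_smallField_le_det_transportJacobian_mul_exp (hm : 0 < m)
    (hA : (A - m • 1).PosSemidef) (hκ : 0 ≤ κ) (hκδ : 16 * κ * δ ≤ m) (hr : 0 ≤ r)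
    (hvar : ∀ j, A⁻¹ j j ≤ r ^ 2) (hs : 0 ≤ s) {a : ι → ℝ} (ha : ∀ j, |a j| ≤ δ) :
    Real.exp (-(1 / 2) * (a ⬝ᵥ A *ᵥ a - κ * ∑ j, (|a j| ^ 3 + |a j| * s ^ 2)))
      ≤ Real.exp (κ * (64 * r ^ 3 + s ^ 3 / 2) * Fintype.card ι) *
        (|(transportJacobian A (4 * κ) a).det| *
          Real.exp (-(1 / 2) * (transport A (4 * κ) a ⬝ᵥ A *ᵥ transport A (4 * κ) a))) := by
  have ht : 0 ≤ 4 * κ := by positivity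
  have hquad := transport_dotProduct_mulVec_transport_le hm hA ht (by linarith) ha
  have hdet := exp_neg_sum_le_det_transportJacobian hm hA ht (by linarith) hvar ha
  have hlinear := mul_le_mul_of_nonneg_left (sum_abs_mul_sq_le a hs) hκ
  have htrace := mul_le_mul_of_nonneg_left (sum_abs_mul_sq_le a (mul_nonneg zero_le_four hr)) hκ
  simp only [mul_pow, ← Finset.sum_mul] at hlinear htrace hdet
  refine le_trans ?_ (mul_le_mul_of_nonneg_left (mul_le_mul_of_nonneg_right
    (hdet.trans (le_abs_self _)) (Real.exp_pos _).le) (Real.exp_pos _).le)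
  rw [← Real.exp_add, ← Real.exp_add, Real.exp_le_exp, Finset.sum_add_distrib, ← Finset.sum_mul]
  linarith

theorem setIntegral_exp_smallField_le (hm : 0 < m) (hA : (A - m • 1).PosSemidef)
    (hκ : 0 ≤ κ) (hκδ : 16 * κ * δ ≤ m) (hr : 0 ≤ r) (hvar : ∀ j, A⁻¹ j j ≤ r ^ 2)
    (hs : 0 ≤ s) :
    ∫ a in {a : ι → ℝ | ∀ j, |a j| ≤ δ},
        Real.exp (-(1 / 2) * (a ⬝ᵥ A *ᵥ a - κ * ∑ j, (|a j| ^ 3 + |a j| * s ^ 2)))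
      ≤ Real.exp (κ * (64 * r ^ 3 + s ^ 3 / 2) * Fintype.card ι) *
        ∫ a : ι → ℝ, Real.exp (-(1 / 2) * (a ⬝ᵥ A *ᵥ a)) := by
  refine setIntegral_le_mul_integral_of_injOn (measurableSet_forall_abs_le δ)
    (fun a _ => (hasFDerivAt_transport A (4 * κ) a).hasFDerivWithinAt)
    (injOn_transport hm hA (by positivity) (by linarith))
    (integrable_exp_neg_half_dotProduct_mulVec hm hA)
    (fun _ => (Real.exp_pos _).le) (fun _ => (Real.exp_pos _).le) (Real.exp_pos _).le
    fun a ha => ?_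
  rw [ContinuousLinearMap.det, LinearMap.coe_toContinuousLinearMap, LinearMap.det_toLin']
  exact exp_smallField_le_det_transportJacobian_mul_exp hm hA hκ hκδ hr hvar hs ha

end SmallField

section TorusLaplacian

variable (L : Fin 3 → ℕ)

lemma lap_isSymm : (lap L).IsSymm := by
  ext x y
  have hadd (i) : x = y + unitVec L i ↔ y = x - unitVec L i := by
    rw [eq_sub_iff_add_eq, eq_comm]
  have hsub (i) : x = y - unitVec L i ↔ y = x + unitVec L i := by
    rw [eq_sub_iff_add_eq, eq_comm]
  simp only [lap, transpose_apply, of_apply, hadd, hsub, eq_comm (a := x) (b := y)]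
  congr 1
  exact Finset.sum_congr rfl fun i _ => add_comm _ _

variable [∀ i, NeZero (L i)]

lemma lap_mulVec (f : Torus L → ℝ) (x : Torus L) :
    (lap L *ᵥ f) x = ∑ i, (f (x + unitVec L i) + f (x - unitVec L i) - 2 * f x) := by
  have heval (g : Fin 3 → Torus L) :
      ∑ y, ∑ i, (if y = g i then f y else 0) = ∑ i, f (g i) := by
    rw [Finset.sum_comm]
    simp
  simp only [mulVec, dotProduct, lap, of_apply, sub_mul, Finset.sum_sub_distrib, Finset.sum_mul,
    add_mul, Finset.sum_add_distrib, ite_mul, one_mul, zero_mul, heval]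
  simp only [Finset.sum_ite_eq', Finset.mem_univ, if_true, Finset.sum_const, Finset.card_univ,
    Fintype.card_fin, nsmul_eq_mul]
  ring

lemma dotProduct_neg_lap_mulVec (f : Torus L → ℝ) :
    f ⬝ᵥ (-lap L) *ᵥ f = ∑ i, ∑ x, (f (x + unitVec L i) - f x) ^ 2 := by
  have hshift (i) : ∑ x, f (x + unitVec L i) ^ 2 = ∑ x, f x ^ 2 :=
    Equiv.sum_comp (Equiv.addRight (unitVec L i)) fun x => f x ^ 2
  have hcross (i) : ∑ x, f x * f (x - unitVec L i) = ∑ x, f x * f (x + unitVec L i) := by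
    rw [← Equiv.sum_comp (Equiv.addRight (unitVec L i))]
    simp [mul_comm]
  rw [neg_mulVec, dotProduct_neg]
  simp only [dotProduct, lap_mulVec, Finset.mul_sum]
  rw [Finset.sum_comm, ← Finset.sum_neg_distrib]
  refine Finset.sum_congr rfl fun i _ => ?_
  calc -∑ x, f x * (f (x + unitVec L i) + f (x - unitVec L i) - 2 * f x)
      = 2 * ∑ x, f x ^ 2 - ∑ x, f x * f (x + unitVec L i) - ∑ x, f x * f (x - unitVec L i) := by
        rw [← Finset.sum_neg_distrib, Finset.mul_sum, ← Finset.sum_sub_distrib,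
          ← Finset.sum_sub_distrib]
        exact Finset.sum_congr rfl fun x _ => by ring
    _ = ∑ x, f (x + unitVec L i) ^ 2 + ∑ x, f x ^ 2 - 2 * ∑ x, f x * f (x + unitVec L i) := by
        rw [hcross, hshift]
        ring
    _ = ∑ x, (f (x + unitVec L i) - f x) ^ 2 := by
        rw [← Finset.sum_add_distrib, Finset.mul_sum, ← Finset.sum_sub_distrib]
        exact Finset.sum_congr rfl fun x _ => by ring

lemma neg_lap_posSemidef : (-lap L).PosSemidef := by
  refine PosSemidef.of_dotProduct_mulVec_nonneg ?_ fun f => ?_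
  · exact IsHermitian.neg (by simpa [IsHermitian] using (lap_isSymm L).eq)
  · rw [star_trivial, dotProduct_neg_lap_mulVec]
    positivity

end TorusLaplacian

section Fourier

lemma stdAddChar_add_neg {n : ℕ} [NeZero n] (j : ZMod n) :
    ZMod.stdAddChar j + ZMod.stdAddChar (-j)
      = ((2 * Real.cos (2 * Real.pi * j.val / n) : ℝ) : ℂ) := by
  rw [AddChar.map_neg_eq_inv, ZMod.stdAddChar_apply, ZMod.toCircle_apply, ← Complex.exp_neg]
  push_cast
  rw [Complex.two_cos]
  congr 2 <;> ring

variable (L : Fin 3 → ℕ)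

/-- Eigenvalue of the negative Laplacian on the torus at frequency `k`. -/
def lapSymbol (k : Torus L) : ℝ :=
  ∑ i, (2 - 2 * Real.cos (2 * Real.pi * (k i).val / L i))

lemma lapSymbol_nonneg (k : Torus L) : 0 ≤ lapSymbol L k :=
  Finset.sum_nonneg fun i _ => by linarith [Real.cos_le_one (2 * Real.pi * (k i).val / L i)]

variable [∀ i, NeZero (L i)]

/-- Real part of the character of the torus with frequency `k`. -/
def torusCos (k x : Torus L) : ℝ := (∏ i, ZMod.stdAddChar (k i * x i)).re

lemma torusCos_zero (k : Torus L) : torusCos L k 0 = 1 := by simp [torusCos]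

lemma torusCos_add_unitVec_add_torusCos_sub_unitVec (k x : Torus L) (i : Fin 3) :
    torusCos L k (x + unitVec L i) + torusCos L k (x - unitVec L i)
      = 2 * Real.cos (2 * Real.pi * (k i).val / L i) * torusCos L k x := by
  have hadd : ∏ j, (ZMod.stdAddChar (k j * unitVec L i j) : ℂ) = ZMod.stdAddChar (k i) := by
    rw [Finset.prod_eq_single i] <;> simp +contextual [unitVec]
  have hsub : ∏ j, (ZMod.stdAddChar (-(k j * unitVec L i j)) : ℂ) = ZMod.stdAddChar (-k i) := by
    rw [Finset.prod_eq_single i] <;> simp +contextual [unitVec]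
  simp only [torusCos, Pi.add_apply, Pi.sub_apply, mul_add, sub_eq_add_neg, mul_neg,
    AddChar.map_add_eq_mul, Finset.prod_mul_distrib, hadd, hsub]
  rw [← Complex.add_re, ← mul_add, stdAddChar_add_neg, Complex.re_mul_ofReal, mul_comm]

lemma sum_torusCos (x : Torus L) :
    ∑ k, torusCos L k x = if x = 0 then (Fintype.card (Torus L) : ℝ) else 0 := by
  have hprod : ∑ k : Torus L, ∏ i, (ZMod.stdAddChar (k i * x i) : ℂ)
      = ∏ i, ∑ j : ZMod (L i), ZMod.stdAddChar (j * x i) := by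
    rw [Finset.prod_univ_sum, Fintype.piFinset_univ]
  simp only [torusCos, ← Complex.re_sum]
  rw [hprod]
  simp only [fun i => AddChar.sum_mulShift (x i) (ZMod.isPrimitive_stdAddChar (L i))]
  split_ifs with hx
  · subst hx
    simp [Fintype.card_pi, Fin.prod_univ_three]
  · obtain ⟨i, hi⟩ := Function.ne_iff.1 hx
    rw [Finset.prod_eq_zero (Finset.mem_univ i) (by simp [show x i ≠ 0 from hi]), Complex.zero_re]

/-- The translation invariant matrix with kernel `torusCos L k`; its columns are eigenvectors of the
Laplacian. -/
def planeWave (k : Torus L) : Matrix (Torus L) (Torus L) ℝ :=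
  Matrix.of fun x y => torusCos L k (x - y)

lemma neg_lap_mul_planeWave (k : Torus L) :
    -lap L * planeWave L k = lapSymbol L k • planeWave L k := by
  ext x y
  have hshift (i) : torusCos L k (x + unitVec L i - y) + torusCos L k (x - unitVec L i - y)
      = 2 * Real.cos (2 * Real.pi * (k i).val / L i) * torusCos L k (x - y) := by
    rw [add_sub_right_comm, sub_right_comm, torusCos_add_unitVec_add_torusCos_sub_unitVec]
  have hcol : (lap L * planeWave L k) x y = (lap L *ᵥ fun z => torusCos L k (z - y)) x := rfl
  rw [Matrix.neg_mul, Matrix.neg_apply, hcol, lap_mulVec, Matrix.smul_apply, smul_eq_mul,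
    planeWave, of_apply, lapSymbol, Finset.sum_mul, ← Finset.sum_neg_distrib]
  refine Finset.sum_congr rfl fun i _ => ?_
  rw [hshift]
  ring

lemma sum_planeWave : ∑ k, planeWave L k = (Fintype.card (Torus L) : ℝ) • 1 := by
  ext x y
  simp only [Matrix.sum_apply, planeWave, of_apply, sum_torusCos, sub_eq_zero, Matrix.smul_apply,
    one_apply, smul_eq_mul, mul_ite, mul_one, mul_zero]

/-- Fourier representation of the Green function of `-t Δ + μ`. -/
def torusGreen (t μ : ℝ) : Matrix (Torus L) (Torus L) ℝ :=
  (Fintype.card (Torus L) : ℝ)⁻¹ • ∑ k, (t * lapSymbol L k + μ)⁻¹ • planeWave L k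

lemma torusGreen_apply_self (t μ : ℝ) (x : Torus L) :
    torusGreen L t μ x x
      = (Fintype.card (Torus L) : ℝ)⁻¹ * ∑ k, (t * lapSymbol L k + μ)⁻¹ := by
  simp only [torusGreen, Matrix.smul_apply, Matrix.sum_apply, planeWave, of_apply, sub_self,
    torusCos_zero, smul_eq_mul, mul_one]

variable {t μ : ℝ}

lemma mul_torusGreen (ht : 0 ≤ t) (hμ : 0 < μ) :
    (t • (-lap L) + μ • 1) * torusGreen L t μ = 1 := by
  have hmode (k : Torus L) : (t • (-lap L) + μ • 1) * planeWave L k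
      = (t * lapSymbol L k + μ) • planeWave L k := by
    rw [add_mul, smul_mul_assoc, neg_lap_mul_planeWave, smul_mul_assoc, one_mul, add_smul,
      mul_smul]
  have hne (k : Torus L) : t * lapSymbol L k + μ ≠ 0 := by
    have := mul_nonneg ht (lapSymbol_nonneg L k)
    positivity
  rw [torusGreen, mul_smul_comm, Finset.mul_sum]
  simp only [mul_smul_comm, hmode, smul_smul, inv_mul_cancel₀ (hne _), one_smul]
  rw [sum_planeWave, smul_smul, inv_mul_cancel₀ (Nat.cast_ne_zero.2 Fintype.card_ne_zero), one_smul]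

lemma inv_eq_torusGreen (ht : 0 ≤ t) (hμ : 0 < μ) :
    (t • (-lap L) + μ • 1)⁻¹ = torusGreen L t μ :=
  inv_eq_right_inv (mul_torusGreen L ht hμ)

end Fourier

section GreenDiagonal

lemma le_two_sub_two_mul_cos {n : ℕ} [NeZero n] (j : ZMod n) :
    16 * ((zdist j : ℝ) / n) ^ 2 ≤ 2 - 2 * Real.cos (2 * Real.pi * j.val / n) := by
  have hn : (0 : ℝ) < n := Nat.cast_pos.2 (NeZero.pos n)
  have hval : j.val ≤ n := (ZMod.val_lt j).le
  have hcos : Real.cos (2 * Real.pi * j.val / n) = Real.cos (2 * Real.pi * (zdist j / n)) := by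
    rw [mul_div_assoc, zdist]
    rcases min_choice j.val (n - j.val) with h | h <;> rw [h]
    rw [Nat.cast_sub hval, sub_div, div_self hn.ne', mul_sub, mul_one, Real.cos_two_pi_sub]
  have hhalf : (zdist j : ℝ) / n ≤ 1 / 2 := by
    have h : 2 * zdist j ≤ n := by unfold zdist; omega
    rw [div_le_div_iff₀ hn two_pos]
    exact_mod_cast (by lia : zdist j * 2 ≤ 1 * n)
  set x := (zdist j : ℝ) / n
  have hx : |2 * Real.pi * x| ≤ Real.pi := by
    rw [abs_of_nonneg (by positivity)]
    nlinarith [Real.pi_pos]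
  have hquad := Real.cos_le_one_sub_mul_cos_sq hx
  have hpi : 2 / Real.pi ^ 2 * (2 * Real.pi * x) ^ 2 = 8 * x ^ 2 := by
    have := Real.pi_ne_zero
    field_simp
    ring
  rw [hcos]
  linarith

lemma sum_zdist_le {n : ℕ} [NeZero n] {f : ℕ → ℝ} (hf : Antitone f) (hf0 : ∀ j, 0 ≤ f j) :
    ∑ j : ZMod n, f (zdist j) ≤ 2 * ∑ j ∈ Finset.range n, f j := by
  have hval (g : ℕ → ℝ) : ∑ j : ZMod n, g j.val = ∑ j ∈ Finset.range n, g j := by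
    obtain _ | m := n
    · exact absurd rfl (NeZero.ne 0)
    · exact Fin.sum_univ_eq_sum_range g (m + 1)
  calc ∑ j : ZMod n, f (zdist j) ≤ ∑ j : ZMod n, (f j.val + f (n - 1 - j.val)) := by
        refine Finset.sum_le_sum fun j _ => ?_
        have hanti := hf (show n - 1 - j.val ≤ n - j.val by lia)
        rw [zdist]
        rcases min_choice j.val (n - j.val) with h | h <;> rw [h] <;>
          linarith [hf0 j.val, hf0 (n - 1 - j.val)]
    _ = 2 * ∑ j ∈ Finset.range n, f j := by
        rw [hval fun j => f j + f (n - 1 - j), Finset.sum_add_distrib, Finset.sum_range_reflect,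
          two_mul]

lemma sum_range_rpow_sub_one_le {s : ℝ} (hs0 : 0 < s) (hs1 : s ≤ 1) (n : ℕ) :
    ∑ j ∈ Finset.range n, ((j : ℝ) + 1) ^ (s - 1) ≤ (n : ℝ) ^ s / s := by
  induction n with
  | zero => simp [Real.zero_rpow hs0.ne']
  | succ n ih =>
    have hn : (0 : ℝ) < n + 1 := by positivity
    have hbernoulli : ((n : ℝ) / (n + 1)) ^ s ≤ 1 - s / (n + 1) := by
      have h := rpow_one_add_le_one_add_mul_self (s := -(1 / ((n : ℝ) + 1)))
        (neg_le_neg ((div_le_one hn).2 (by linarith [n.cast_nonneg (α := ℝ)]))) hs0.le hs1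
      convert h using 2
      · field_simp
        ring
      · ring
    have hstep : s * ((n : ℝ) + 1) ^ (s - 1) ≤ ((n : ℝ) + 1) ^ s - (n : ℝ) ^ s := by
      rw [Real.div_rpow n.cast_nonneg hn.le, div_le_iff₀ (by positivity)] at hbernoulli
      rw [Real.rpow_sub_one hn.ne']
      linear_combination hbernoulli
    rw [Finset.sum_range_succ, Nat.cast_add_one, le_div_iff₀ hs0]
    rw [le_div_iff₀ hs0] at ih
    linarith

lemma prod_one_add_rpow_le {ι : Type*} [Fintype ι] [Nonempty ι] {x : ι → ℝ} (hx : ∀ i, 0 ≤ x i) :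
    ∏ i, (1 + x i) ^ (2 / Fintype.card ι : ℝ)
      ≤ 2 / Fintype.card ι * (Fintype.card ι + ∑ i, x i ^ 2) := by
  have hcard : (Fintype.card ι : ℝ) ≠ 0 := Nat.cast_ne_zero.2 Fintype.card_ne_zero
  have hamgm := Real.geom_mean_le_arith_mean_weighted Finset.univ
    (fun _ : ι => (Fintype.card ι : ℝ)⁻¹) (fun i => (1 + x i) ^ 2) (fun _ _ => by positivity)
    (by simp [hcard]) (fun i _ => by positivity)
  have hpow (i) : ((1 + x i) ^ 2) ^ (Fintype.card ι : ℝ)⁻¹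
      = (1 + x i) ^ (2 / Fintype.card ι : ℝ) := by
    rw [← Real.rpow_natCast, ← Real.rpow_mul (by linarith [hx i]), Nat.cast_ofNat, div_eq_mul_inv]
  calc ∏ i, (1 + x i) ^ (2 / Fintype.card ι : ℝ)
      ≤ (Fintype.card ι : ℝ)⁻¹ * ∑ i, (1 + x i) ^ 2 := by
        simpa only [hpow, ← Finset.mul_sum] using hamgm
    _ ≤ (Fintype.card ι : ℝ)⁻¹ * ∑ i, 2 * (1 + x i ^ 2) := by
        gcongr with i
        nlinarith [sq_nonneg (x i - 1)]
    _ = 2 / Fintype.card ι * (Fintype.card ι + ∑ i, x i ^ 2) := by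
        rw [← Finset.mul_sum, Finset.sum_add_distrib, Finset.sum_const, Finset.card_univ,
          nsmul_one]
        ring

lemma inv_le_mul_prod_one_add_rpow {x : Fin 3 → ℝ} (hx : ∀ i, 0 ≤ x i) {c μ : ℝ} (hμ : 0 < μ)
    (hc : 16 * ∑ i, x i ^ 2 ≤ c) :
    (c + μ)⁻¹ ≤ (1 / 24 + 2 / μ) * ∏ i, (1 + x i) ^ (-(2 / 3) : ℝ) := by
  have hamgm := prod_one_add_rpow_le hx
  have hprod : 0 < ∏ i, (1 + x i) ^ (2 / 3 : ℝ) :=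
    Finset.prod_pos fun i _ => Real.rpow_pos_of_pos (by linarith [hx i]) _
  have hsum : 0 ≤ ∑ i, x i ^ 2 := by positivity
  simp only [Real.rpow_neg (add_nonneg zero_le_one (hx _)), Finset.prod_inv_distrib]
  rw [← div_eq_mul_inv, le_div_iff₀ hprod, inv_mul_le_iff₀ (by linarith)]
  simp only [Fintype.card_fin, Nat.cast_ofNat] at hamgm
  calc ∏ i, (1 + x i) ^ (2 / 3 : ℝ) ≤ 2 / 3 * (3 + ∑ i, x i ^ 2) := hamgm
    _ ≤ 2 / 3 * (3 + ∑ i, x i ^ 2) + (μ / 24 + 32 * (∑ i, x i ^ 2) / μ) := by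
        linarith [show 0 ≤ μ / 24 + 32 * (∑ i, x i ^ 2) / μ by positivity]
    _ = (16 * ∑ i, x i ^ 2 + μ) * (1 / 24 + 2 / μ) := by
        field_simp
        ring
    _ ≤ (c + μ) * (1 / 24 + 2 / μ) := by gcongr

lemma sum_one_add_zdist_rpow_le {n : ℕ} [NeZero n] {ℓ : ℝ} (hℓ : 0 < ℓ) (hℓn : ℓ ≤ n) :
    ∑ j : ZMod n, (1 + ℓ * (zdist j / n)) ^ (-(2 / 3) : ℝ) ≤ 6 * n / ℓ ^ (2 / 3 : ℝ) := by
  have hn : (0 : ℝ) < n := Nat.cast_pos.2 (NeZero.pos n)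
  have hscale (z : ℕ) : (1 + ℓ * (z / n)) ^ (-(2 / 3) : ℝ)
      ≤ (ℓ / n) ^ (-(2 / 3) : ℝ) * ((z : ℝ) + 1) ^ (-(2 / 3) : ℝ) := by
    rw [← Real.mul_rpow (by positivity) (by positivity)]
    refine Real.rpow_le_rpow_of_nonpos (by positivity) ?_ (by norm_num)
    have := (div_le_one hn).2 hℓn
    linear_combination this
  have hanti : Antitone fun z : ℕ => ((z : ℝ) + 1) ^ (-(2 / 3) : ℝ) := fun y z hyz =>
    Real.rpow_le_rpow_of_nonpos (by positivity) (by gcongr) (by norm_num)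
  have hrange := sum_range_rpow_sub_one_le (s := 1 / 3) (by norm_num) (by norm_num) n
  rw [show (1 / 3 - 1 : ℝ) = -(2 / 3) by norm_num] at hrange
  calc ∑ j : ZMod n, (1 + ℓ * (zdist j / n)) ^ (-(2 / 3) : ℝ)
      ≤ (ℓ / n) ^ (-(2 / 3) : ℝ) * ∑ j : ZMod n, ((zdist j : ℝ) + 1) ^ (-(2 / 3) : ℝ) := by
        rw [Finset.mul_sum]
        exact Finset.sum_le_sum fun j _ => hscale _
    _ ≤ (ℓ / n) ^ (-(2 / 3) : ℝ) * (2 * ((n : ℝ) ^ (1 / 3 : ℝ) / (1 / 3))) := by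
        gcongr
        exact (sum_zdist_le hanti fun z => by positivity).trans (by gcongr)
    _ = 6 * ((n : ℝ) ^ (2 / 3 : ℝ) * (n : ℝ) ^ (1 / 3 : ℝ)) / ℓ ^ (2 / 3 : ℝ) := by
        rw [Real.rpow_neg (by positivity), Real.div_rpow hℓ.le hn.le]
        field_simp
        ring
    _ = 6 * n / ℓ ^ (2 / 3 : ℝ) := by
        rw [← Real.rpow_add hn]
        norm_num

variable (L : Fin 3 → ℕ) [∀ i, NeZero (L i)] {ℓ μ : ℝ}

lemma sum_sq_zdist_le_lapSymbol (ℓ : ℝ) (k : Torus L) :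
    16 * ∑ i, (ℓ * ((zdist (k i) : ℝ) / L i)) ^ 2 ≤ ℓ ^ 2 * lapSymbol L k := by
  rw [lapSymbol, Finset.mul_sum, Finset.mul_sum]
  refine Finset.sum_le_sum fun i _ => ?_
  rw [mul_pow, mul_left_comm]
  exact mul_le_mul_of_nonneg_left (le_two_sub_two_mul_cos (k i)) (sq_nonneg ℓ)

lemma sum_prod_one_add_zdist_rpow_le (hℓ : 0 < ℓ) (hL : ∀ i, ℓ ≤ L i) :
    ∑ k : Torus L, ∏ i, (1 + ℓ * (zdist (k i) / L i)) ^ (-(2 / 3) : ℝ)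
      ≤ 216 * Fintype.card (Torus L) / ℓ ^ 2 := by
  calc ∑ k : Torus L, ∏ i, (1 + ℓ * (zdist (k i) / L i)) ^ (-(2 / 3) : ℝ)
      = ∏ i, ∑ j : ZMod (L i), (1 + ℓ * (zdist j / L i)) ^ (-(2 / 3) : ℝ) := by
        rw [Finset.prod_univ_sum, Fintype.piFinset_univ]
    _ ≤ ∏ i, 6 * (L i : ℝ) / ℓ ^ (2 / 3 : ℝ) := by
        gcongr with i
        exact sum_one_add_zdist_rpow_le hℓ (hL i)
    _ = 216 * Fintype.card (Torus L) / ℓ ^ 2 := by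
        have hpow : (ℓ ^ (2 / 3 : ℝ)) ^ 3 = ℓ ^ 2 := by
          rw [← Real.rpow_mul_natCast hℓ.le]
          norm_num
        rw [Finset.prod_div_distrib, Finset.prod_mul_distrib, Finset.prod_const, Finset.prod_const,
          Finset.card_univ, Fintype.card_fin, hpow, Fintype.card_pi]
        norm_num [ZMod.card]

/- AM–GM bounds each Fourier mode by a product over the three directions, which replaces a
three-dimensional lattice sum by a product of one-dimensional ones. -/
theorem torusGreen_apply_self_le (hℓ : 0 < ℓ) (hL : ∀ i, ℓ ≤ L i) (hμ : 0 < μ) (x : Torus L) :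
    torusGreen L (ℓ ^ 2) μ x x ≤ (9 + 432 / μ) / ℓ ^ 2 := by
  have hmode (k : Torus L) : (ℓ ^ 2 * lapSymbol L k + μ)⁻¹
      ≤ (1 / 24 + 2 / μ) * ∏ i, (1 + ℓ * (zdist (k i) / L i)) ^ (-(2 / 3) : ℝ) :=
    inv_le_mul_prod_one_add_rpow (fun i => by positivity) hμ (sum_sq_zdist_le_lapSymbol L ℓ k)
  have hcard : (Fintype.card (Torus L) : ℝ) ≠ 0 := Nat.cast_ne_zero.2 Fintype.card_ne_zero
  rw [torusGreen_apply_self]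
  calc (Fintype.card (Torus L) : ℝ)⁻¹ * ∑ k, (ℓ ^ 2 * lapSymbol L k + μ)⁻¹
      ≤ (Fintype.card (Torus L) : ℝ)⁻¹ * ∑ k : Torus L, (1 / 24 + 2 / μ) *
          ∏ i, (1 + ℓ * (zdist (k i) / L i)) ^ (-(2 / 3) : ℝ) := by
        gcongr with k
        exact hmode k
    _ ≤ (Fintype.card (Torus L) : ℝ)⁻¹ * ((1 / 24 + 2 / μ) *
          (216 * Fintype.card (Torus L) / ℓ ^ 2)) := by
        rw [← Finset.mul_sum]
        gcongr
        exact sum_prod_one_add_zdist_rpow_le L hℓ hL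
    _ = (9 + 432 / μ) / ℓ ^ 2 := by
        field_simp
        ring

end GreenDiagonal

section PartitionFunction

lemma exists_forall_mul_rpow_neg_le (c : ℝ) {p ε : ℝ} (hp : 0 < p) (hε : 0 < ε) :
    ∃ W₀ : ℕ, ∀ W : ℕ, W₀ ≤ W → c * (W : ℝ) ^ (-p) ≤ ε := by
  have hlim : Tendsto (fun W : ℕ => c * (W : ℝ) ^ (-p)) atTop (𝓝 (c * 0)) :=
    ((tendsto_rpow_neg_atTop hp).comp tendsto_natCast_atTop_atTop).const_mul c
  exact eventually_atTop.1 (hlim.eventually_le_const (by simpa using hε))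

lemma le_mr2_of_mem_specI {η E : ℝ} (hE : E ∈ specI η) : 0.38 ≤ mr2 E := by
  have hsq : E ^ 2 ≤ 1.8 ^ 2 := sq_le_sq' (abs_le.1 hE.2).1 (abs_le.1 hE.2).2
  rw [mr2]
  linarith

theorem partition_function_bound_general {κ μ : ℝ} (hκ : 0 ≤ κ) (hμ : 0 < μ) :
    ∃ K : ℝ, ∀ W : ℕ, 0 < W → ∀ δ : ℝ, 16 * κ * δ ≤ μ →
      ∀ (L : Fin 3 → ℕ) [∀ i, NeZero (L i)], (∀ i, W ≤ L i) →
      ∀ E : ℝ, μ ≤ mr2 E →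
        (∫ a in {a : Torus L → ℝ | ∀ j, |a j| ≤ δ},
            Real.exp (-(1 / 2) *
              (qf L ((Cmat L W E)⁻¹) a - κ * ∑ j, (|a j| ^ 3 + |a j| / (W : ℝ) ^ 2))))
          ≤ Real.exp (K * (Fintype.card (Torus L) : ℝ) / (W : ℝ) ^ 3) *
            ∫ a : Torus L → ℝ, Real.exp (-(1 / 2) * qf L ((Cmat L W E)⁻¹) a) := by
  set v := 9 + 432 / μ
  refine ⟨κ * (64 * √v ^ 3 + 1 / 2), fun W hW δ hδ L _ hL E hE => ?_⟩
  have hW' : (0 : ℝ) < W := Nat.cast_pos.2 hW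
  have hE' : 0 < mr2 E := hμ.trans_le hE
  set A := (W : ℝ) ^ 2 • (-lap L) + mr2 E • (1 : Matrix (Torus L) (Torus L) ℝ) with hAdef
  have hA : (A - mr2 E • 1).PosSemidef := by
    rw [hAdef, add_sub_cancel_right]
    exact (neg_lap_posSemidef L).smul (sq_nonneg _)
  have hCinv : (Cmat L W E)⁻¹ = A :=
    nonsing_inv_nonsing_inv A ((isUnit_iff_isUnit_det A).1 (posDef_of_posSemidef_sub hE' hA).isUnit)
  have hvar (j : Torus L) : A⁻¹ j j ≤ (√v / W) ^ 2 := by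
    rw [hAdef, inv_eq_torusGreen L (sq_nonneg _) hE', div_pow, Real.sq_sqrt (by positivity)]
    refine (torusGreen_apply_self_le L hW' (fun i => Nat.cast_le.2 (hL i)) hE' j).trans ?_
    gcongr
    exact add_le_add_right (div_le_div_of_nonneg_left (by norm_num) hμ hE) 9
  have hbound := setIntegral_exp_smallField_le hE' hA hκ (hδ.trans hE) (by positivity) hvar
    (inv_nonneg.2 hW'.le)
  simp only [hCinv, qf]
  convert hbound using 2
  · simp only [div_eq_mul_inv, inv_pow]
  · congr 1
    field_simp

end PartitionFunction

/-- Brascamp–Lieb estimate on the small-field partition function: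
`Z(H) ≤ e^{K|Λ|/W³} Z₀` where `H(a) = aᵀC⁻¹a - κ Σ_j (|a_j|³ + |a_j|/W²)` and the integral
defining `Z(H)` is restricted to the small-field region `I¹ = {|a_j| ≤ W^{-1/8} ∀j}`. -/
theorem partition_function_bound (η : ℝ) (hη : 0 < η) (κ : ℝ) (hκ : 0 < κ) :
    ∃ (W₀ : ℕ) (K : ℝ),
      ∀ (W : ℕ), W₀ ≤ W →
      ∀ (L : Fin 3 → ℕ) [∀ i, NeZero (L i)], (∀ i, L i = W) →
      ∀ E ∈ specI η,
        (∫ a in {a : Torus L → ℝ | ∀ j, |a j| ≤ (W : ℝ) ^ (-(1 / 8 : ℝ))},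
            Real.exp (-(1 / 2) *
              (qf L ((Cmat L W E)⁻¹) a - κ * ∑ j, (|a j| ^ 3 + |a j| / (W : ℝ) ^ 2))))
          ≤ Real.exp (K * (Fintype.card (Torus L) : ℝ) / (W : ℝ) ^ 3) *
            ∫ a : Torus L → ℝ, Real.exp (-(1 / 2) * qf L ((Cmat L W E)⁻¹) a) := by
  obtain ⟨W₀, hW₀⟩ := exists_forall_mul_rpow_neg_le (16 * κ) (p := 1 / 8) (ε := 0.38)
    (by norm_num) (by norm_num)
  obtain ⟨K, hK⟩ := partition_function_bound_general (μ := 0.38) hκ.le (by norm_num)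
  exact ⟨W₀, K, fun W hW L _ hL E hE => hK W (hL 0 ▸ NeZero.pos (L 0)) _ (hW₀ W hW) L
    (fun i => (hL i).ge) E (le_mr2_of_mem_specI hE)⟩
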